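/- Let C be a small category. There is a model category structure on the category P(C, Grpd) of presheaves of groupoids on C (functors Cᵒᵖ → Grpd) in which: a map φ is a weak equivalence if φ(X) : F(X) → G(X) is an equivalence of groupoids for every X ∈ C; a map φ is a fibration if φ(X) is an isofibration of groupoids for every X ∈ C; and the cofibrations are the maps with the left lifting property with respect to all maps that are simultaneously weak equivalences and fibrations. -/

import Mathlib

open CategoryTheory

universe u

/-- `f` is a retract of `g` (in the arrow category). -/
def IsRetractOf {M : Type*} [Category M] {X Y Z W : M} (f : X ⟶ Y) (g : Z ⟶ W) : Prop :=
  ∃ (iX : X ⟶ Z) (rX : Z ⟶ X) (iY : Y ⟶ W) (rY : W ⟶ Y),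
    iX ≫ rX = 𝟙 X ∧ iY ≫ rY = 𝟙 Y ∧ iX ≫ g = f ≫ iY ∧ g ≫ rY = rX ≫ f

/-- A class of morphisms is stable under retracts. -/
def StableUnderRetracts {M : Type*} [Category M] (P : MorphismProperty M) : Prop :=
  ∀ ⦃X Y Z W : M⦄ (f : X ⟶ Y) (g : Z ⟶ W), IsRetractOf f g → P g → P f

/-- Quillen's axioms for a model structure with the given classes of
weak equivalences, fibrations and cofibrations (bicompleteness of the
underlying category being taken for granted). -/
structure IsModelStructure {M : Type*} [Category M]
    (W Fib Cof : MorphismProperty M) : Prop where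
  /-- two-out-of-three for weak equivalences -/
  comp_mem : ∀ ⦃X Y Z : M⦄ (f : X ⟶ Y) (g : Y ⟶ Z), W f → W g → W (f ≫ g)
  of_postcomp : ∀ ⦃X Y Z : M⦄ (f : X ⟶ Y) (g : Y ⟶ Z), W g → W (f ≫ g) → W f
  of_precomp : ∀ ⦃X Y Z : M⦄ (f : X ⟶ Y) (g : Y ⟶ Z), W f → W (f ≫ g) → W g
  /-- the three classes are closed under retracts -/
  weq_retract : StableUnderRetracts W
  fib_retract : StableUnderRetracts Fib
  cof_retract : StableUnderRetracts Cof
  /-- lifting axioms -/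
  lift_cof_trivFib : ∀ ⦃A B X Y : M⦄ (i : A ⟶ B) (p : X ⟶ Y),
    Cof i → Fib p → W p → HasLiftingProperty i p
  lift_trivCof_fib : ∀ ⦃A B X Y : M⦄ (i : A ⟶ B) (p : X ⟶ Y),
    Cof i → W i → Fib p → HasLiftingProperty i p
  /-- factorization axioms -/
  fact_cof_trivFib : ∀ ⦃X Y : M⦄ (f : X ⟶ Y),
    ∃ (Z : M) (i : X ⟶ Z) (p : Z ⟶ Y), Cof i ∧ Fib p ∧ W p ∧ i ≫ p = f
  fact_trivCof_fib : ∀ ⦃X Y : M⦄ (f : X ⟶ Y),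
    ∃ (Z : M) (i : X ⟶ Z) (p : Z ⟶ Y), Cof i ∧ W i ∧ Fib p ∧ i ≫ p = f

/-- A functor between groupoids is an isofibration if every isomorphism out of the
image of an object lifts. -/
def IsIsofibration {G H : Type*} [Groupoid G] [Groupoid H] (F : G ⥤ H) : Prop :=
  ∀ (a : G) (y : H) (g : F.obj a ≅ y),
    ∃ (b : G) (e : a ≅ b) (h : F.obj b = y), F.map e.hom = g.hom ≫ eqToHom h.symm


namespace PGM

section Grpds

variable {X Y X' Y' : Type u} [Groupoid.{u} X] [Groupoid.{u} Y] [Groupoid.{u} X']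
  [Groupoid.{u} Y']

/-- Objects of the mapping path groupoid. -/
structure PathOb (F : X ⥤ Y) : Type u where
  x : X
  y0 : Y
  y : Y
  g : y0 ⟶ y
  h : F.obj x = y0

instance (F : X ⥤ Y) : Groupoid.{u} (PathOb F) where
  Hom a b := a.x ⟶ b.x
  id a := 𝟙 a.x
  comp f g := f ≫ g
  id_comp f := Category.id_comp (obj := X) f
  comp_id f := Category.comp_id (obj := X) f
  assoc f g h := Category.assoc (obj := X) f g h
  inv f := Groupoid.inv (obj := X) f
  inv_comp f := Groupoid.inv_comp (obj := X) f
  comp_inv f := Groupoid.comp_inv (obj := X) f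

def pathMap {F : X ⥤ Y} {F' : X' ⥤ Y'} (U : X ⥤ X') (V : Y ⥤ Y') (comm : F ⋙ V = U ⋙ F') :
    PathOb F ⥤ PathOb F' where
  obj a := ⟨U.obj a.x, V.obj a.y0, V.obj a.y, V.map a.g, by
    rw [← a.h]; exact (Functor.congr_obj comm a.x).symm⟩
  map f := U.map f
  map_id a := U.map_id a.x
  map_comp f g := U.map_comp _ _

lemma pathMap_congr {F : X ⥤ Y} {F' : X' ⥤ Y'} {U U' : X ⥤ X'} {V V' : Y ⥤ Y'}
    (hU : U = U') (hV : V = V') (comm : F ⋙ V = U ⋙ F') (comm' : F ⋙ V' = U' ⋙ F') :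
    pathMap U V comm = pathMap U' V' comm' := by
  subst hU hV; rfl

def pathJ (F : X ⥤ Y) : X ⥤ PathOb F where
  obj x := ⟨x, F.obj x, F.obj x, 𝟙 _, rfl⟩
  map f := f
  map_id _ := rfl
  map_comp _ _ := rfl

lemma pathJ_isEquivalence (F : X ⥤ Y) : (pathJ F).IsEquivalence where
  faithful := ⟨fun h => h⟩
  full := ⟨fun f => ⟨f, rfl⟩⟩
  essSurj := ⟨fun a => ⟨a.x, ⟨(Groupoid.isoEquivHom _ _).symm
    (show (pathJ F).obj a.x ⟶ a from 𝟙 a.x)⟩⟩⟩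

def pathP (F : X ⥤ Y) : PathOb F ⥤ Y where
  obj a := a.y
  map {a b} f := Groupoid.inv a.g ≫ eqToHom a.h.symm ≫ F.map (X := a.x) (Y := b.x) f ≫
    eqToHom b.h ≫ b.g
  map_id a := by
    have : F.map (X := a.x) (Y := a.x) (𝟙 a) = 𝟙 _ := F.map_id a.x
    rw [this]; simp
  map_comp {a b c} f g := by
    have : F.map (X := a.x) (Y := c.x) (f ≫ g) =
      F.map (X := a.x) (Y := b.x) f ≫ F.map (X := b.x) (Y := c.x) g := F.map_comp _ _
    erw [this]; simp

lemma pathJ_pathP (F : X ⥤ Y) : pathJ F ⋙ pathP F = F := by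
  refine CategoryTheory.Functor.ext (fun x => rfl) (fun a b f => ?_)
  simp [pathJ, pathP]
  exact (Category.id_comp _).symm

lemma pathJ_pathMap {F : X ⥤ Y} {F' : X' ⥤ Y'} (U : X ⥤ X') (V : Y ⥤ Y')
    (comm : F ⋙ V = U ⋙ F') : pathJ F ⋙ pathMap U V comm = U ⋙ pathJ F' := by
  have key : ∀ x, (pathJ F ⋙ pathMap U V comm).obj x = (U ⋙ pathJ F').obj x := by
    intro x
    have h := Functor.congr_obj comm x
    dsimp at h
    have : ∀ (z z' : Y') (h : z = z') (e : F'.obj (U.obj x) = z) (e' : F'.obj (U.obj x) = z'),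
      (⟨U.obj x, z, z, 𝟙 z, e⟩ : PathOb F') = ⟨U.obj x, z', z', 𝟙 z', e'⟩ := by
      intro z z' h e e'; subst h; rfl
    have e0 : V.map (𝟙 (F.obj x)) = 𝟙 _ := V.map_id _
    simp only [Functor.comp_obj, pathJ, pathMap, e0]
    exact this _ _ h _ _
  have aux : ∀ (a b : PathOb F') (h : a = b) (hx : a.x = b.x),
      (eqToHom h : a ⟶ b) = (eqToHom hx : a.x ⟶ b.x) := by
    intro a b h hx; subst h; rfl
  refine CategoryTheory.Functor.ext key (fun a b f => ?_)
  rw [aux _ _ (key a) rfl, aux _ _ (key b).symm rfl]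
  change U.map f = 𝟙 _ ≫ U.map f ≫ 𝟙 _
  simp

lemma pathMap_pathP {F : X ⥤ Y} {F' : X' ⥤ Y'} (U : X ⥤ X') (V : Y ⥤ Y')
    (comm : F ⋙ V = U ⋙ F') : pathMap U V comm ⋙ pathP F' = pathP F ⋙ V := by
  refine CategoryTheory.Functor.ext (fun x => rfl) (fun a b f => ?_)
  have := Functor.congr_hom comm (X := a.x) (Y := b.x) f
  simp only [Functor.comp_map] at this
  simp [pathMap, pathP, this, eqToHom_map]

lemma pathP_isofib (F : X ⥤ Y) : IsIsofibration (pathP F) := by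
  intro a y g
  let b : PathOb F := ⟨a.x, a.y0, y, a.g ≫ g.hom, a.h⟩
  refine ⟨b, (Groupoid.isoEquivHom _ _).symm (show a ⟶ b from 𝟙 a.x), rfl, ?_⟩
  have : F.map (X := a.x) (Y := a.x) (𝟙 a.x) = 𝟙 _ := F.map_id a.x
  simp [pathP, b, Groupoid.isoEquivHom]
  exact (Category.comp_id _).symm

lemma pathMap_id_ff (F : X ⥤ Y) (comm : 𝟭 X ⋙ F = 𝟭 X ⋙ F) (hF : IsIsofibration F) :
    (pathMap (F := 𝟭 X) (𝟭 X) F comm).Full ∧ (pathMap (F := 𝟭 X) (𝟭 X) F comm).Faithful ∧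
      Function.Surjective (pathMap (F := 𝟭 X) (𝟭 X) F comm).obj := by
  refine ⟨⟨fun f => ⟨f, rfl⟩⟩, ⟨fun h => h⟩, ?_⟩
  rintro ⟨x, y0, y, g, h⟩
  subst h
  obtain ⟨b, e, h, hh⟩ := hF x y (Groupoid.isoEquivHom _ _ |>.symm g)
  subst h
  refine ⟨⟨x, x, b, e.hom, rfl⟩, ?_⟩
  simp at hh
  simp [pathMap, hh]

lemma isEquivalence_of_surj (F : X ⥤ Y) (h1 : F.Full) (h2 : F.Faithful)
    (h3 : Function.Surjective F.obj) : F.IsEquivalence where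
  essSurj := ⟨fun y => by obtain ⟨x, rfl⟩ := h3 y; exact ⟨x, ⟨Iso.refl _⟩⟩⟩

lemma isofib_of_surj (F : X ⥤ Y) (h1 : F.Full) 
    (h3 : Function.Surjective F.obj) : IsIsofibration F := by
  intro a y g
  obtain ⟨b, rfl⟩ := h3 y
  obtain ⟨e, he⟩ := F.map_surjective g.hom
  exact ⟨b, (Groupoid.isoEquivHom _ _).symm e, rfl, by simpa using he⟩

lemma surj_of_isofib (F : X ⥤ Y) (h1 : F.IsEquivalence) (h : IsIsofibration F) :
    Function.Surjective F.obj := by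
  intro y
  obtain ⟨b, _, hb, _⟩ := h _ _ (F.objObjPreimageIso y)
  exact ⟨b, hb⟩

lemma isofib_comp (F : X ⥤ Y) (G : Y ⥤ X') (hF : IsIsofibration F) (hG : IsIsofibration G) :
    IsIsofibration (F ⋙ G) := by
  intro a y g
  obtain ⟨b, e, rfl, hb⟩ := hG (F.obj a) y g
  obtain ⟨c, e', rfl, hc⟩ := hF a b e
  refine ⟨c, e', rfl, ?_⟩
  simp at hb hc
  simp [hc, hb]

lemma isofib_retract (F : X ⥤ Y) (G : X' ⥤ Y') (iX : X ⥤ X') (rX : X' ⥤ X) (iY : Y ⥤ Y')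
    (rY : Y' ⥤ Y) (hX : iX ⋙ rX = 𝟭 X) (hY : iY ⋙ rY = 𝟭 Y) (hi : iX ⋙ G = F ⋙ iY)
    (hr : G ⋙ rY = rX ⋙ F) (hG : IsIsofibration G) : IsIsofibration F := by
  intro a y g
  have h0 : G.obj (iX.obj a) = iY.obj (F.obj a) := Functor.congr_obj hi a
  obtain ⟨b, e, hb, he⟩ := hG (iX.obj a) (iY.obj y) (eqToIso h0 ≪≫ iY.mapIso g)
  have h1 : rX.obj (iX.obj a) = a := Functor.congr_obj hX a
  have h2 : F.obj (rX.obj b) = rY.obj (G.obj b) := (Functor.congr_obj hr b).symm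
  have h3 : rY.obj (iY.obj y) = y := Functor.congr_obj hY y
  refine ⟨rX.obj b, eqToIso h1.symm ≪≫ rX.mapIso e, by rw [h2, hb, h3], ?_⟩
  have k1 := Functor.congr_hom hr e.hom
  have k2 := Functor.congr_hom hY g.hom
  simp only [Functor.comp_map, Functor.id_map] at k1 k2
  rw [he] at k1
  simp [k2, eqToHom_map] at k1
  simp [eqToHom_map]
  have k3 : F.map (rX.map e.hom) = eqToHom (by
      have := (Functor.congr_obj hr (iX.obj a)).symm
      simp at this; rw [this, h0]; exact Functor.congr_obj hY _) ≫ g.hom ≫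
        eqToHom (by rw [h2, hb, h3]) := by
    rw [← cancel_epi (eqToHom (Functor.congr_obj hr (iX.obj a))),
      ← cancel_mono (eqToHom h2)]
    simp [k1]
  simp [k3]

lemma equiv_retract (F : X ⥤ Y) (G : X' ⥤ Y') (iX : X ⥤ X') (rX : X' ⥤ X) (iY : Y ⥤ Y')
    (rY : Y' ⥤ Y) (hX : iX ⋙ rX = 𝟭 X) (hY : iY ⋙ rY = 𝟭 Y) (hi : iX ⋙ G = F ⋙ iY)
    (hr : G ⋙ rY = rX ⋙ F) (hG : G.IsEquivalence) : F.IsEquivalence := by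
  have e1 : 𝟭 X ≅ F ⋙ (iY ⋙ G.inv ⋙ rX) :=
    eqToIso hX.symm ≪≫ Functor.isoWhiskerLeft iX
      (Functor.isoWhiskerRight G.asEquivalence.unitIso rX) ≪≫
      eqToIso (show iX ⋙ (G ⋙ G.inv) ⋙ rX = _ by
        change (iX ⋙ G) ⋙ G.inv ⋙ rX = _; rw [hi]; rfl)
  have e2 : (iY ⋙ G.inv ⋙ rX) ⋙ F ≅ 𝟭 Y :=
    eqToIso (show _ = iY ⋙ (G.inv ⋙ G) ⋙ rY by
        change iY ⋙ G.inv ⋙ rX ⋙ F = iY ⋙ G.inv ⋙ G ⋙ rY; rw [hr]) ≪≫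
      Functor.isoWhiskerLeft iY
      (Functor.isoWhiskerRight G.asEquivalence.counitIso rY) ≪≫ eqToIso hY
  exact Functor.IsEquivalence.mk' _ e1 e2

/-- Functors into the domain of a faithful functor. -/
lemma functor_eq_of_faithful (F G : X ⥤ Y) (ψ : Y ⥤ Y') (hψ : ψ.Faithful)
    (hobj : ∀ x, F.obj x = G.obj x) (h : F ⋙ ψ = G ⋙ ψ) : F = G := by
  refine CategoryTheory.Functor.ext hobj (fun a b f => ψ.map_injective ?_)
  have := Functor.congr_hom h f
  simp only [Functor.comp_map] at this
  simp [this, eqToHom_map]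

/-- Lifting a functor along a fully faithful functor. -/
noncomputable def liftFF (k : X ⥤ Y') (ψ : Y ⥤ Y') (h1 : ψ.Full) (h2 : ψ.Faithful) (σ : X → Y)
    (h : ∀ x, ψ.obj (σ x) = k.obj x) : X ⥤ Y where
  obj := σ
  map {a b} f := ψ.preimage (eqToHom (h a) ≫ k.map f ≫ eqToHom (h b).symm)
  map_id a := ψ.map_injective (by simp)
  map_comp f g := ψ.map_injective (by simp)

lemma liftFF_comp (k : X ⥤ Y') (ψ : Y ⥤ Y') (h1 : ψ.Full) (h2 : ψ.Faithful) (σ : X → Y)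
    (h : ∀ x, ψ.obj (σ x) = k.obj x) : liftFF k ψ h1 h2 σ h ⋙ ψ = k := by
  refine CategoryTheory.Functor.ext h (fun a b f => ?_)
  simp [liftFF]

/-- Groupoid pulled back along a map on objects. -/
structure PullOb {Y S : Type u} (π : S → Y) : Type u where
  s : S
  y : Y
  h : π s = y

lemma PullOb.ext' {Y S : Type u} {π : S → Y} {a b : PullOb π} (h : a.s = b.s) : a = b := by
  obtain ⟨s, y, rfl⟩ := a
  obtain ⟨t, y', rfl⟩ := b
  dsimp at h; subst h; rfl

instance {S : Type u} (π : S → Y) : Groupoid.{u} (PullOb π) where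
  Hom a b := a.y ⟶ b.y
  id a := 𝟙 a.y
  comp f g := f ≫ g
  id_comp f := Category.id_comp (obj := Y) f
  comp_id f := Category.comp_id (obj := Y) f
  assoc f g h := Category.assoc (obj := Y) f g h
  inv f := Groupoid.inv (obj := Y) f
  inv_comp f := Groupoid.inv_comp (obj := Y) f
  comp_inv f := Groupoid.comp_inv (obj := Y) f

def pullProj {S : Type u} (π : S → Y) : PullOb π ⥤ Y where
  obj a := a.y
  map f := f
  map_id _ := rfl
  map_comp _ _ := rfl

def pullLift {S : Type u} (π : S → Y) (t : X ⥤ Y) (σ : X → S) (h : ∀ x, π (σ x) = t.obj x) :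
    X ⥤ PullOb π where
  obj x := ⟨σ x, t.obj x, h x⟩
  map f := t.map f
  map_id a := t.map_id a
  map_comp f g := t.map_comp f g

lemma pullLift_congr {S : Type u} (π : S → Y) {t t' : X ⥤ Y} {σ σ' : X → S}
    (ht : t = t') (hσ : σ = σ') (h : ∀ x, π (σ x) = t.obj x) (h' : ∀ x, π (σ' x) = t'.obj x) :
    pullLift π t σ h = pullLift π t' σ' h' := by
  subst ht hσ; rfl

end Grpds

section Presheaves

variable {C : Type u} [Category.{u} C]

/-- underlying functor of a component -/
abbrev fn {F G : Cᵒᵖ ⥤ Grpd.{u, u}} (φ : F ⟶ G) (c : Cᵒᵖ) : F.obj c ⥤ G.obj c := φ.app c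

/-- underlying functor of a restriction map -/
abbrev rs (F : Cᵒᵖ ⥤ Grpd.{u, u}) {c d : Cᵒᵖ} (h : c ⟶ d) : F.obj c ⥤ F.obj d := F.map h

lemma rs_id (F : Cᵒᵖ ⥤ Grpd.{u, u}) (c : Cᵒᵖ) : rs F (𝟙 c) = 𝟭 _ := F.map_id c

lemma rs_comp (F : Cᵒᵖ ⥤ Grpd.{u, u}) {c d e : Cᵒᵖ} (h : c ⟶ d) (k : d ⟶ e) :
    rs F (h ≫ k) = rs F h ⋙ rs F k := F.map_comp h k

lemma fn_nat {F G : Cᵒᵖ ⥤ Grpd.{u, u}} (φ : F ⟶ G) {c d : Cᵒᵖ} (h : c ⟶ d) :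
    fn φ c ⋙ rs G h = rs F h ⋙ fn φ d := (φ.naturality h).symm

lemma fn_nat_obj {F G : Cᵒᵖ ⥤ Grpd.{u, u}} (φ : F ⟶ G) {c d : Cᵒᵖ} (h : c ⟶ d) (x : F.obj c) :
    (rs G h).obj ((fn φ c).obj x) = (fn φ d).obj ((rs F h).obj x) :=
  Functor.congr_obj (fn_nat φ h) x

lemma fn_comp {F G H : Cᵒᵖ ⥤ Grpd.{u, u}} (φ : F ⟶ G) (ψ : G ⟶ H) (c : Cᵒᵖ) :
    fn (φ ≫ ψ) c = fn φ c ⋙ fn ψ c := rfl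

lemma fn_id (F : Cᵒᵖ ⥤ Grpd.{u, u}) (c : Cᵒᵖ) :
    fn (𝟙 F) c = 𝟭 _ := rfl

lemma fn_ext {F G : Cᵒᵖ ⥤ Grpd.{u, u}} {φ ψ : F ⟶ G} (h : ∀ c, fn φ c = fn ψ c) : φ = ψ :=
  NatTrans.ext (funext h)

/-- Construct a presheaf map from strictly natural functors. -/
def mkHom {F G : Cᵒᵖ ⥤ Grpd.{u, u}} (φ : ∀ c, F.obj c ⥤ G.obj c)
    (h : ∀ {c d : Cᵒᵖ} (h : c ⟶ d), φ c ⋙ rs G h = rs F h ⋙ φ d) : F ⟶ G where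
  app c := φ c
  naturality _ _ k := (h k).symm

/-- The mapping path presheaf. -/
def PP {F G : Cᵒᵖ ⥤ Grpd.{u, u}} (φ : F ⟶ G) : Cᵒᵖ ⥤ Grpd.{u, u} where
  obj c := Grpd.of (PathOb (fn φ c))
  map h := pathMap (rs F h) (rs G h) (fn_nat φ h)
  map_id c := pathMap_congr (rs_id F c) (rs_id G c) _ rfl
  map_comp {a b c} h k := pathMap_congr (rs_comp F h k) (rs_comp G h k) _ (by
    rw [← rs_comp, ← rs_comp]; exact fn_nat φ _)

def PJ {F G : Cᵒᵖ ⥤ Grpd.{u, u}} (φ : F ⟶ G) : F ⟶ PP φ :=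
  mkHom (fun c => pathJ (fn φ c)) (fun h => pathJ_pathMap _ _ (fn_nat φ h))

def PR {F G : Cᵒᵖ ⥤ Grpd.{u, u}} (φ : F ⟶ G) : PP φ ⟶ G :=
  mkHom (fun c => pathP (fn φ c)) (fun h => (pathMap_pathP _ _ (fn_nat φ h)).symm)

lemma PJ_PR {F G : Cᵒᵖ ⥤ Grpd.{u, u}} (φ : F ⟶ G) : PJ φ ≫ PR φ = φ :=
  fn_ext (fun c => pathJ_pathP (fn φ c))

lemma sq_fn {F G F' G' : Cᵒᵖ ⥤ Grpd.{u, u}} {φ : F ⟶ G} {φ' : F' ⟶ G'} {U : F ⟶ F'} {V : G ⟶ G'}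
    (comm : φ ≫ V = U ≫ φ') (c : Cᵒᵖ) : fn φ c ⋙ fn V c = fn U c ⋙ fn φ' c :=
  congrArg (fun t => fn t c) comm

def PM {F G F' G' : Cᵒᵖ ⥤ Grpd.{u, u}} (φ : F ⟶ G) (φ' : F' ⟶ G') (U : F ⟶ F') (V : G ⟶ G')
    (comm : φ ≫ V = U ≫ φ') : PP φ ⟶ PP φ' :=
  mkHom (fun c => pathMap (fn U c) (fn V c) (sq_fn comm c)) (fun {c d} h =>
    pathMap_congr (F := fn φ c) (F' := fn φ' d) (fn_nat U h) (fn_nat V h) (by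
      rw [← Functor.assoc, sq_fn comm, Functor.assoc, fn_nat]; rfl) (by
      rw [← Functor.assoc, fn_nat, Functor.assoc, sq_fn comm]; rfl))

lemma PJ_PM {F G F' G' : Cᵒᵖ ⥤ Grpd.{u, u}} (φ : F ⟶ G) (φ' : F' ⟶ G') (U : F ⟶ F') (V : G ⟶ G')
    (comm : φ ≫ V = U ≫ φ') : PJ φ ≫ PM φ φ' U V comm = U ≫ PJ φ' :=
  fn_ext (fun c => pathJ_pathMap (fn U c) (fn V c) (sq_fn comm c))

lemma PM_PR {F G F' G' : Cᵒᵖ ⥤ Grpd.{u, u}} (φ : F ⟶ G) (φ' : F' ⟶ G') (U : F ⟶ F') (V : G ⟶ G')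
    (comm : φ ≫ V = U ≫ φ') : PM φ φ' U V comm ≫ PR φ' = PR φ ≫ V :=
  fn_ext (fun c => pathMap_pathP (fn U c) (fn V c) (sq_fn comm c))

/-- objectwise equivalences -/
def Weq {F G : Cᵒᵖ ⥤ Grpd.{u, u}} (φ : F ⟶ G) : Prop := ∀ c, (fn φ c).IsEquivalence
/-- objectwise isofibrations -/
def Fibr {F G : Cᵒᵖ ⥤ Grpd.{u, u}} (φ : F ⟶ G) : Prop := ∀ c, IsIsofibration (fn φ c)
/-- cofibrations -/
def Cofib {F G : Cᵒᵖ ⥤ Grpd.{u, u}} (φ : F ⟶ G) : Prop :=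
  ∀ ⦃H K : Cᵒᵖ ⥤ Grpd.{u, u}⦄ (ψ : H ⟶ K), Weq ψ → Fibr ψ → HasLiftingProperty φ ψ

lemma PJ_weq {F G : Cᵒᵖ ⥤ Grpd.{u, u}} (φ : F ⟶ G) : Weq (PJ φ) :=
  fun c => pathJ_isEquivalence (fn φ c)

lemma PR_fib {F G : Cᵒᵖ ⥤ Grpd.{u, u}} (φ : F ⟶ G) : Fibr (PR φ) :=
  fun c => pathP_isofib (fn φ c)

lemma PM_triv {E B : Cᵒᵖ ⥤ Grpd.{u, u}} (q : E ⟶ B) (comm : 𝟙 E ≫ q = 𝟙 E ≫ q) (hq : Fibr q) :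
    Weq (PM (𝟙 E) q (𝟙 E) q comm) ∧ Fibr (PM (𝟙 E) q (𝟙 E) q comm) := by
  have key := fun c => pathMap_id_ff (fn q c) rfl (hq c)
  exact ⟨fun c => isEquivalence_of_surj _ (key c).1 (key c).2.1 (key c).2.2,
    fun c => isofib_of_surj _ (key c).1 (key c).2.2⟩

lemma weq_comp {F G H : Cᵒᵖ ⥤ Grpd.{u, u}} (φ : F ⟶ G) (ψ : G ⟶ H) (h1 : Weq φ) (h2 : Weq ψ) :
    Weq (φ ≫ ψ) := fun c => by
  have := h1 c; have := h2 c
  exact Functor.isEquivalence_trans (fn φ c) (fn ψ c)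

lemma weq_of_post {F G H : Cᵒᵖ ⥤ Grpd.{u, u}} (φ : F ⟶ G) (ψ : G ⟶ H) (h1 : Weq ψ)
    (h2 : Weq (φ ≫ ψ)) : Weq φ := fun c => by
  have := h1 c; have : (fn φ c ⋙ fn ψ c).IsEquivalence := h2 c
  exact Functor.isEquivalence_of_comp_right (fn φ c) (fn ψ c)

lemma weq_of_pre {F G H : Cᵒᵖ ⥤ Grpd.{u, u}} (φ : F ⟶ G) (ψ : G ⟶ H) (h1 : Weq φ)
    (h2 : Weq (φ ≫ ψ)) : Weq ψ := fun c => by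
  have := h1 c; have : (fn φ c ⋙ fn ψ c).IsEquivalence := h2 c
  exact Functor.isEquivalence_of_comp_left (fn φ c) (fn ψ c)

lemma lift_triv_cof {A B E D : Cᵒᵖ ⥤ Grpd.{u, u}} (i : A ⟶ B) (q : E ⟶ D) (hi : Cofib i)
    (hw : Weq i) (hq : Fibr q) : HasLiftingProperty i q := by
  constructor
  intro a b sq
  have hPw : Weq (PR i) := weq_of_pre (PJ i) (PR i) (PJ_weq i) (by rw [PJ_PR]; exact hw)
  have := hi (PR i) hPw (PR_fib i)
  have sq1 : CommSq (PJ i) i (PR i) (𝟙 B) := ⟨by rw [PJ_PR, Category.comp_id]⟩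
  have comm : i ≫ b = a ≫ q := sq.w.symm
  have ht := PM_triv q rfl hq
  have := hi _ ht.1 ht.2
  have sq2 : CommSq (a ≫ PJ (𝟙 E)) i (PM (𝟙 E) q (𝟙 E) q rfl)
      (sq1.lift ≫ PM i q a b comm) := ⟨by
    rw [Category.assoc, PJ_PM, Category.id_comp, ← Category.assoc, sq1.fac_left, PJ_PM]⟩
  refine ⟨⟨⟨sq2.lift ≫ PR (𝟙 E), ?_, ?_⟩⟩⟩
  · rw [← Category.assoc, sq2.fac_left, Category.assoc, PJ_PR, Category.comp_id]
  · rw [Category.assoc, ← PM_PR (𝟙 E) q (𝟙 E) q rfl, ← Category.assoc, sq2.fac_right,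
      Category.assoc, PM_PR, ← Category.assoc, sq1.fac_right, Category.id_comp]

section Fact

variable {F G : Cᵒᵖ ⥤ Grpd.{u, u}} (f : F ⟶ G)

/-- objects of the factorization -/
def SS (F G : Cᵒᵖ ⥤ Grpd.{u, u}) (c : Cᵒᵖ) : Type u := F.obj c ⊕ (Σ d : Cᵒᵖ, G.obj d × (d ⟶ c))

def sMap (F G : Cᵒᵖ ⥤ Grpd.{u, u}) {c c' : Cᵒᵖ} (h : c ⟶ c') : SS F G c → SS F G c'
  | Sum.inl x => Sum.inl ((rs F h).obj x)
  | Sum.inr ⟨d, y, k⟩ => Sum.inr ⟨d, y, k ≫ h⟩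

lemma sMap_id (c : Cᵒᵖ) (s : SS F G c) : sMap F G (𝟙 c) s = s := by
  rcases s with x | ⟨d, y, k⟩
  · simp only [sMap, rs_id]; rfl
  · simp only [sMap, Category.comp_id]; rfl

lemma sMap_comp {c d e : Cᵒᵖ} (h : c ⟶ d) (k : d ⟶ e) (s : SS F G c) :
    sMap F G (h ≫ k) s = sMap F G k (sMap F G h s) := by
  rcases s with x | ⟨d, y, k⟩
  · simp only [sMap, rs_comp]; rfl
  · simp only [sMap, Category.assoc]; rfl

def sPi (c : Cᵒᵖ) : SS F G c → G.obj c
  | Sum.inl x => (fn f c).obj x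
  | Sum.inr ⟨_, y, k⟩ => (rs G k).obj y

lemma sPi_nat {c d : Cᵒᵖ} (h : c ⟶ d) (s : SS F G c) :
    sPi f d (sMap F G h s) = (rs G h).obj (sPi f c s) := by
  rcases s with x | ⟨d, y, k⟩
  · exact (fn_nat_obj f h x).symm
  · simp only [sMap, sPi, rs_comp]; rfl

def zMap {c d : Cᵒᵖ} (h : c ⟶ d) : PullOb (sPi f c) ⥤ PullOb (sPi f d) :=
  pullLift (sPi f d) (pullProj (sPi f c) ⋙ rs G h) (fun a => sMap F G h a.s)
    (fun a => by rw [sPi_nat, a.h]; rfl)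

def ZZ : Cᵒᵖ ⥤ Grpd.{u, u} where
  obj c := Grpd.of (PullOb (sPi f c))
  map h := zMap f h
  map_id c := pullLift_congr (X := PullOb (sPi f c)) (sPi f c) (t' := pullProj (sPi f c))
    (σ' := fun a => a.s) (by rw [rs_id]; rfl) (funext fun a => sMap_id _ _) _ (fun a => a.h)
  map_comp {c d e} h k := pullLift_congr (X := PullOb (sPi f c)) (sPi f e)
    (t' := pullProj (sPi f c) ⋙ rs G h ⋙ rs G k)
    (σ' := fun a => sMap F G k (sMap F G h a.s)) (by rw [rs_comp])
    (funext fun a => sMap_comp _ _ _) _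
    (fun a => by rw [sPi_nat, sPi_nat, a.h]; rfl)

def ZI : F ⟶ ZZ f :=
  mkHom (fun c => pullLift (sPi f c) (fn f c) (fun x => Sum.inl x) (fun x => rfl))
    (fun {c d} h => pullLift_congr (X := F.obj c) (sPi f d)
      (t := fn f c ⋙ rs G h) (t' := rs F h ⋙ fn f d)
      (σ := fun x => sMap F G h (Sum.inl x)) (σ' := fun x => Sum.inl ((rs F h).obj x))
      (fn_nat f h) rfl (fun x => (fn_nat_obj f h x).symm) (fun x => rfl))

def ZP : ZZ f ⟶ G :=
  mkHom (fun c => pullProj (sPi f c)) (fun h => rfl)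

lemma ZI_ZP : ZI f ≫ ZP f = f := rfl

lemma ZP_key (c : Cᵒᵖ) : (fn (ZP f) c).Full ∧ (fn (ZP f) c).Faithful ∧
    Function.Surjective (fn (ZP f) c).obj := by
  refine ⟨⟨fun g => ⟨g, rfl⟩⟩, ⟨fun h => h⟩, fun y => ?_⟩
  exact ⟨(⟨Sum.inr ⟨c, y, 𝟙 c⟩, y, by simp only [sPi, rs_id]; rfl⟩ : PullOb (sPi f c)), rfl⟩

lemma ZP_weq : Weq (ZP f) := fun c =>
  isEquivalence_of_surj _ (ZP_key f c).1 (ZP_key f c).2.1 (ZP_key f c).2.2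

lemma ZP_fib : Fibr (ZP f) := fun c => isofib_of_surj _ (ZP_key f c).1 (ZP_key f c).2.2

lemma ff_lift {T H K : Cᵒᵖ ⥤ Grpd.{u, u}} (k : T ⟶ K) (ψ : H ⟶ K)
    (h1 : ∀ c, (fn ψ c).Full) (h2 : ∀ c, (fn ψ c).Faithful) (σ : ∀ c, T.obj c → H.obj c)
    (hσ : ∀ c x, (fn ψ c).obj (σ c x) = (fn k c).obj x)
    (nat : ∀ {c d : Cᵒᵖ} (h : c ⟶ d) (x : T.obj c), (rs H h).obj (σ c x) = σ d ((rs T h).obj x)) :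
    ∃ t : T ⟶ H, t ≫ ψ = k ∧ ∀ c x, (fn t c).obj x = σ c x := by
  have key : ∀ c, liftFF (fn k c) (fn ψ c) (h1 c) (h2 c) (σ c) (hσ c) ⋙ fn ψ c = fn k c :=
    fun c => liftFF_comp _ _ _ _ _ _
  refine ⟨mkHom (fun c => liftFF (fn k c) (fn ψ c) (h1 c) (h2 c) (σ c) (hσ c)) ?_, ?_, ?_⟩
  · intro c d h
    refine functor_eq_of_faithful _ _ (fn ψ d) (h2 d) (fun x => nat h x) ?_
    rw [Functor.assoc, Functor.assoc, key, ← fn_nat, ← Functor.assoc, key, fn_nat]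
  · exact fn_ext key
  · intro c x; rfl

lemma ZI_cof : Cofib (ZI f) := by
  intro H K ψ hw hf
  constructor
  intro g k sq
  have h1 : ∀ c, (fn ψ c).Full := fun c => (hw c).full
  have h2 : ∀ c, (fn ψ c).Faithful := fun c => (hw c).faithful
  have h3 : ∀ c, Function.Surjective (fn ψ c).obj := fun c => surj_of_isofib _ (hw c) (hf c)
  let gen : ∀ (d : Cᵒᵖ) (y : G.obj d), (ZZ f).obj d := fun d y =>
    (⟨Sum.inr ⟨d, y, 𝟙 d⟩, y, by simp only [sPi, rs_id]; rfl⟩ : PullOb (sPi f d))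
  choose l hl using fun (d : Cᵒᵖ) (y : G.obj d) => h3 d ((fn k d).obj (gen d y))
  let τ : ∀ c, SS F G c → H.obj c := fun c s => match s with
    | Sum.inl x => (fn g c).obj x
    | Sum.inr ⟨d, y, r⟩ => (rs H r).obj (l d y)
  let σ : ∀ c, (ZZ f).obj c → H.obj c := fun c z => τ c (PullOb.s (π := sPi f c) z)
  obtain ⟨t, ht, ht'⟩ := ff_lift k ψ h1 h2 σ (by
    intro c z
    obtain ⟨s, y, hy⟩ : PullOb (sPi f c) := z
    subst hy
    rcases s with x | ⟨d, y, r⟩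
    · exact Functor.congr_obj (congrArg (fun t => fn t c) sq.w) x
    · change (fn ψ c).obj ((rs H r).obj (l d y)) = _
      rw [← fn_nat_obj, hl, fn_nat_obj]
      congr 1
      apply PullOb.ext'
      change sMap F G r (Sum.inr ⟨d, y, 𝟙 d⟩) = Sum.inr ⟨d, y, r⟩
      simp only [sMap, Category.id_comp]; rfl) (by
    intro c d h z
    obtain ⟨s, y, hy⟩ : PullOb (sPi f c) := z
    subst hy
    rcases s with x | ⟨d, y, r⟩
    · exact fn_nat_obj g h x
    · change (rs H h).obj ((rs H r).obj (l _ y)) = (rs H (r ≫ h)).obj (l _ y)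
      rw [rs_comp]; rfl)
  refine ⟨⟨⟨t, ?_, ht⟩⟩⟩
  refine fn_ext fun c => functor_eq_of_faithful _ _ (fn ψ c) (h2 c) (fun x => ht' c _) ?_
  rw [← fn_comp, ← fn_comp, Category.assoc, ht, sq.w]

end Fact

end Presheaves

end PGM

/-- The objectwise model structure on the category of presheaves of groupoids on a
small category `C`: weak equivalences (resp. fibrations) are the maps which are
objectwise equivalences of groupoids (resp. objectwise isofibrations), and cofibrations
are the maps having the left lifting property with respect to the maps which are both
weak equivalences and fibrations. -/
theorem presheaves_of_groupoids_model_structure (C : Type u) [Category.{u} C] :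
    IsModelStructure (M := Cᵒᵖ ⥤ Grpd.{u, u})
      (fun F G (φ : NatTrans F G) => ∀ X : Cᵒᵖ, Functor.IsEquivalence (φ.app X : _ ⥤ _))
      (fun F G (φ : NatTrans F G) => ∀ X : Cᵒᵖ, IsIsofibration (φ.app X : _ ⥤ _))
      (fun F G (φ : NatTrans F G) => ∀ ⦃H K : Cᵒᵖ ⥤ Grpd.{u, u}⦄ (ψ : H ⟶ K),
        (∀ X : Cᵒᵖ, Functor.IsEquivalence (ψ.app X : _ ⥤ _)) →
        (∀ X : Cᵒᵖ, IsIsofibration (ψ.app X : _ ⥤ _)) →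
        HasLiftingProperty φ ψ) := by
  refine
    { comp_mem := fun _ _ _ f g hf hg => PGM.weq_comp f g hf hg
      of_postcomp := fun _ _ _ f g hg hfg => PGM.weq_of_post f g hg hfg
      of_precomp := fun _ _ _ f g hf hfg => PGM.weq_of_pre f g hf hfg
      weq_retract := ?_
      fib_retract := ?_
      cof_retract := ?_
      lift_cof_trivFib := fun _ _ _ _ i p hi hp hw => hi p hw hp
      lift_trivCof_fib := fun _ _ _ _ i p hi hw hp => PGM.lift_triv_cof i p hi hw hp
      fact_cof_trivFib := fun _ _ f =>
        ⟨PGM.ZZ f, PGM.ZI f, PGM.ZP f, PGM.ZI_cof f, PGM.ZP_fib f, PGM.ZP_weq f, PGM.ZI_ZP f⟩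
      fact_trivCof_fib := ?_ }
  · rintro X Y Z W f g ⟨iX, rX, iY, rY, h1, h2, h3, h4⟩ hg c
    exact PGM.equiv_retract (PGM.fn f c) (PGM.fn g c) (PGM.fn iX c) (PGM.fn rX c) (PGM.fn iY c)
      (PGM.fn rY c) (congrArg (fun t => PGM.fn t c) h1) (congrArg (fun t => PGM.fn t c) h2)
      (congrArg (fun t => PGM.fn t c) h3) (congrArg (fun t => PGM.fn t c) h4) (hg c)
  · rintro X Y Z W f g ⟨iX, rX, iY, rY, h1, h2, h3, h4⟩ hg c
    exact PGM.isofib_retract (PGM.fn f c) (PGM.fn g c) (PGM.fn iX c) (PGM.fn rX c) (PGM.fn iY c)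
      (PGM.fn rY c) (congrArg (fun t => PGM.fn t c) h1) (congrArg (fun t => PGM.fn t c) h2)
      (congrArg (fun t => PGM.fn t c) h3) (congrArg (fun t => PGM.fn t c) h4) (hg c)
  · rintro X Y Z W f g ⟨iX, rX, iY, rY, h1, h2, h3, h4⟩ hg H K ψ hw hf
    have := hg ψ hw hf
    constructor
    intro a b sq
    have sq' : CommSq (rX ≫ a) g ψ (rY ≫ b) := ⟨by
      rw [Category.assoc, sq.w, ← Category.assoc, ← h4, Category.assoc]⟩
    refine ⟨⟨⟨iY ≫ sq'.lift, ?_, ?_⟩⟩⟩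
    · rw [← Category.assoc, ← h3, Category.assoc, sq'.fac_left, ← Category.assoc, h1,
        Category.id_comp]
    · rw [Category.assoc, sq'.fac_right, ← Category.assoc, h2, Category.id_comp]
  · intro X Y f
    refine ⟨PGM.ZZ (PGM.PJ f), PGM.ZI (PGM.PJ f), PGM.ZP (PGM.PJ f) ≫ PGM.PR f,
      PGM.ZI_cof _, ?_, ?_, ?_⟩
    · exact PGM.weq_of_post _ (PGM.ZP (PGM.PJ f)) (PGM.ZP_weq _) (PGM.PJ_weq f)
    · exact fun c => PGM.isofib_comp _ _ (PGM.ZP_fib (PGM.PJ f) c) (PGM.PR_fib f c)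
    · rw [← Category.assoc, PGM.ZI_ZP, PGM.PJ_PR]
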